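/- Let ξ be a state on ℓ^∞ invariant under the unit shift T_1 and invariant under the dilation D_j for every j ∈ ℕ. Then for every a > 0, ξ({f(k/a)}_{k≥1}) = ξ({f(k)}_{k≥1}). -/

import Mathlib

open Filter

/-- A bounded real sequence (an element of `ℓ^∞`). -/
def IsBddSeq (a : ℕ → ℝ) : Prop := ∃ C, ∀ k, |a k| ≤ C

/-- A state on `ℓ^∞`: a positive linear functional with `ξ(1) = 1`
(linearity and positivity are required on bounded sequences). -/
def IsLinfState (ξ : (ℕ → ℝ) → ℝ) : Prop :=
  (∀ a b : ℕ → ℝ, IsBddSeq a → IsBddSeq b → ξ (a + b) = ξ a + ξ b) ∧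
  (∀ (c : ℝ) (a : ℕ → ℝ), IsBddSeq a → ξ (c • a) = c * ξ a) ∧
  (∀ a : ℕ → ℝ, IsBddSeq a → (∀ k, 0 ≤ a k) → 0 ≤ ξ a) ∧
  ξ (fun _ => 1) = 1

/-- A generalised limit: a state on `ℓ^∞` with
`liminf a ≤ ξ a ≤ limsup a` for every bounded nonnegative sequence. -/
def IsGenLim (ξ : (ℕ → ℝ) → ℝ) : Prop :=
  IsLinfState ξ ∧
  ∀ a : ℕ → ℝ, IsBddSeq a → (∀ k, 0 ≤ a k) →
    liminf a atTop ≤ ξ a ∧ ξ a ≤ limsup a atTop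

/-- Invariance under the unit shift `T_1`. -/
def ShiftInv (ξ : (ℕ → ℝ) → ℝ) : Prop :=
  ∀ a : ℕ → ℝ, IsBddSeq a → ξ (fun k => a (k + 1)) = ξ a

/-- Invariance under the dilations `D_j`, `D_j(a)_k = a_{⌈k/j⌉}`
(`⌈k/j⌉ = (k + j - 1)/j` in natural division). -/
def DilInv (ξ : (ℕ → ℝ) → ℝ) : Prop :=
  ∀ j : ℕ, 0 < j → ∀ a : ℕ → ℝ, IsBddSeq a →
    ξ (fun k => a ((k + j - 1) / j)) = ξ a

/-!
Write `φ x = ξ (f (k x))`, and call `x > 0` good if `φ x = φ 1`. Since `t f(t) = g(t)` is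
nondecreasing and `f` is bounded, moving the sample points of `f` up by a bounded amount lowers its
values by at most `o(1)`, which a shift-invariant state does not see. Hence `⌈k / n⌉` may be
replaced by `k / n`, dilation invariance yields `φ (x / n) = φ x`, and all positive rationals are
good. Finally `x ↦ x φ x` is nondecreasing and agrees with the continuous function `x ↦ x φ 1` at
the positive rationals, so the two functions coincide.
-/

section MonotoneOn

open Set Topology

theorem eqOn_of_monotoneOn_of_continuousOn_of_dense {α β : Type*}
    [LinearOrder α] [TopologicalSpace α] [OrderTopology α] [DenselyOrdered α]
    [NoMinOrder α] [NoMaxOrder α]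
    [PartialOrder β] [TopologicalSpace β] [OrderClosedTopology β]
    {h c : α → β} {s D : Set α} (hs : IsOpen s) (hD : Dense D)
    (hh : MonotoneOn h s) (hc : ContinuousOn c s) (hhc : EqOn h c (s ∩ D)) :
    EqOn h c s := by
  intro x hx
  have hcx : Tendsto c (𝓝 x) (𝓝 (c x)) := hc.continuousAt (hs.mem_nhds hx)
  have frequently_mem {I : Set α} (hI : IsOpen I) (hxI : x ∈ closure I) :
      ∃ᶠ y in 𝓝 x, y ∈ I ∩ D ∧ y ∈ s :=
    (mem_closure_iff_frequently.1
      (closure_minimal (hD.open_subset_closure_inter hI) isClosed_closure hxI)).and_eventually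
      (hs.mem_nhds hx)
  apply le_antisymm
  · refine ge_of_tendsto_of_frequently hcx ?_
    refine (frequently_mem isOpen_Ioi (by simp : x ∈ closure (Ioi x))).mono ?_
    rintro y ⟨⟨hxy, hyD⟩, hys⟩
    exact (hh hx hys (mem_Ioi.1 hxy).le).trans_eq (hhc ⟨hys, hyD⟩)
  · refine le_of_tendsto_of_frequently hcx ?_
    refine (frequently_mem isOpen_Iio (by simp : x ∈ closure (Iio x))).mono ?_
    rintro y ⟨⟨hyx, hyD⟩, hys⟩
    exact (hhc ⟨hys, hyD⟩).ge.trans (hh hys hx (mem_Iio.1 hyx).le)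

end MonotoneOn

namespace IsBddSeq

variable {a b : ℕ → ℝ}

theorem const (c : ℝ) : IsBddSeq fun _ => c :=
  ⟨|c|, fun _ => le_rfl⟩

theorem comp (ha : IsBddSeq a) (n : ℕ → ℕ) : IsBddSeq fun k => a (n k) :=
  ha.imp fun _ hC k => hC (n k)

theorem add (ha : IsBddSeq a) (hb : IsBddSeq b) : IsBddSeq (a + b) := by
  obtain ⟨A, hA⟩ := ha
  obtain ⟨B, hB⟩ := hb
  exact ⟨A + B, fun k => (abs_add_le _ _).trans (add_le_add (hA k) (hB k))⟩

theorem smul (c : ℝ) (ha : IsBddSeq a) : IsBddSeq (c • a) := by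
  obtain ⟨A, hA⟩ := ha
  refine ⟨|c| * A, fun k => ?_⟩
  rw [Pi.smul_apply, smul_eq_mul, abs_mul]
  exact mul_le_mul_of_nonneg_left (hA k) (abs_nonneg c)

end IsBddSeq

theorem ShiftInv.map_add_nat {ξ : (ℕ → ℝ) → ℝ} (hT : ShiftInv ξ) {a : ℕ → ℝ} (ha : IsBddSeq a)
    (N : ℕ) : ξ (fun k => a (k + N)) = ξ a := by
  induction N with
  | zero => rfl
  | succ N ih => simpa only [add_right_comm, add_assoc] using (hT _ (ha.comp (· + N))).trans ih

namespace IsLinfState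

variable {ξ : (ℕ → ℝ) → ℝ} {a b : ℕ → ℝ}

theorem map_const (hξ : IsLinfState ξ) (c : ℝ) : ξ (fun _ => c) = c := by
  obtain ⟨-, map_smul, -, map_one⟩ := hξ
  simpa [map_one, Pi.smul_def] using map_smul c _ (.const 1)

theorem mono (hξ : IsLinfState ξ) (ha : IsBddSeq a) (hb : IsBddSeq b) (hab : ∀ k, a k ≤ b k) :
    ξ a ≤ ξ b := by
  obtain ⟨map_add, map_smul, map_nonneg, -⟩ := hξ
  have hneg : IsBddSeq ((-1 : ℝ) • a) := ha.smul (-1)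
  have hdiff : 0 ≤ ξ (b + (-1 : ℝ) • a) := map_nonneg _ (hb.add hneg) fun k => by
    simpa using hab k
  rw [map_add _ _ hb hneg, map_smul _ _ ha] at hdiff
  linarith

theorem le_of_eventually_le_add (hξ : IsLinfState ξ) (hT : ShiftInv ξ)
    (ha : IsBddSeq a) (hb : IsBddSeq b)
    (hab : ∀ ε > 0, ∀ᶠ k in atTop, a k ≤ b k + ε) : ξ a ≤ ξ b := by
  refine le_of_forall_pos_le_add fun ε hε => ?_
  obtain ⟨N, hN⟩ := eventually_atTop.1 (hab ε hε)
  have hbN : IsBddSeq fun k => b (k + N) := hb.comp (· + N)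
  calc ξ a = ξ (fun k => a (k + N)) := (hT.map_add_nat ha N).symm
    _ ≤ ξ ((fun k => b (k + N)) + fun _ => ε) :=
      hξ.mono (ha.comp (· + N)) (hbN.add (.const ε)) fun k => hN _ (Nat.le_add_left N k)
    _ = ξ b + ε := by rw [hξ.1 _ _ hbN (.const ε), hT.map_add_nat hb, hξ.map_const]

end IsLinfState

/-- The functions `f` that are bounded on `[0, ∞)` and of the form `f t = g t / t` for `t > 0`
with `g` nondecreasing on `(0, ∞)`. The numerator is encoded as `g t = t * f t`. -/
structure IsBddMonotoneRatio (f : ℝ → ℝ) : Prop where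
  bounded : ∃ C, ∀ t ≥ (0 : ℝ), |f t| ≤ C
  monotoneOn_mul_self : MonotoneOn (fun t => t * f t) (Set.Ioi 0)

namespace IsBddMonotoneRatio

variable {f : ℝ → ℝ} {ξ : (ℕ → ℝ) → ℝ}

theorem of_eq_div {g : ℝ → ℝ} (hfb : ∃ C, ∀ t ≥ (0 : ℝ), |f t| ≤ C)
    (hfg : ∀ t > (0 : ℝ), f t = g t / t) (hg : MonotoneOn g (Set.Ioi 0)) :
    IsBddMonotoneRatio f where
  bounded := hfb
  monotoneOn_mul_self := hg.congr fun t (ht : 0 < t) => by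
    rw [hfg t ht, mul_div_cancel₀ _ ht.ne']

theorem comp_mul_right (hf : IsBddMonotoneRatio f) {r : ℝ} (hr : 0 < r) :
    IsBddMonotoneRatio fun t => f (t * r) where
  bounded := hf.bounded.imp fun _ hC t ht => hC (t * r) (mul_nonneg ht hr.le)
  monotoneOn_mul_self t ht u hu htu := by
    have hmul : t * r * f (t * r) ≤ u * r * f (u * r) :=
      hf.monotoneOn_mul_self (mul_pos ht hr) (mul_pos hu hr) (mul_le_mul_of_nonneg_right htu hr.le)
    refine le_of_mul_le_mul_right ?_ hr
    linarith

theorem isBddSeq_comp (hf : IsBddMonotoneRatio f) {s : ℕ → ℝ} (hs : ∀ k, 0 ≤ s k) :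
    IsBddSeq fun k => f (s k) :=
  hf.bounded.imp fun _ hC k => hC (s k) (hs k)

theorem le_add_div (hf : IsBddMonotoneRatio f) {C d s u : ℝ} (hC : ∀ t ≥ (0 : ℝ), |f t| ≤ C)
    (hs : 0 < s) (hsu : s ≤ u) (hus : u ≤ s + d) : f s ≤ f u + d * C / s := by
  have hu : 0 < u := hs.trans_le hsu
  have hfu : |f u| ≤ C := hC u hu.le
  have hincrement : (u - s) * f u ≤ d * C :=
    calc (u - s) * f u ≤ (u - s) * C :=
          mul_le_mul_of_nonneg_left ((le_abs_self _).trans hfu) (sub_nonneg.2 hsu)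
      _ ≤ d * C :=
          mul_le_mul_of_nonneg_right (sub_le_iff_le_add'.2 hus) ((abs_nonneg _).trans hfu)
  refine le_of_mul_le_mul_left ?_ hs
  calc s * f s ≤ u * f u := hf.monotoneOn_mul_self hs hu hsu
    _ = s * f u + (u - s) * f u := by ring
    _ ≤ s * f u + d * C := by gcongr
    _ = s * (f u + d * C / s) := by field_simp

theorem map_comp_le_map_comp (hf : IsBddMonotoneRatio f) (hξ : IsLinfState ξ) (hT : ShiftInv ξ)
    {s u : ℕ → ℝ} {d : ℝ} (hs : ∀ k, 0 ≤ s k) (hs_top : Tendsto s atTop atTop)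
    (hsu : ∀ k, s k ≤ u k) (hus : ∀ k, u k ≤ s k + d) :
    ξ (fun k => f (s k)) ≤ ξ (fun k => f (u k)) := by
  obtain ⟨C, hC⟩ := hf.bounded
  refine hξ.le_of_eventually_le_add hT (hf.isBddSeq_comp hs)
    (hf.isBddSeq_comp fun k => (hs k).trans (hsu k)) fun ε hε => ?_
  filter_upwards [hs_top.eventually_gt_atTop 0,
    (hs_top.const_div_atTop (d * C)).eventually_le_const hε] with k hsk hk
  exact (hf.le_add_div hC hsk (hsu k) (hus k)).trans (by gcongr)

theorem map_div_natCast (hf : IsBddMonotoneRatio f) (hξ : IsLinfState ξ) (hT : ShiftInv ξ)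
    (hD : DilInv ξ) {n : ℕ} (hn : 0 < n) :
    ξ (fun k => f ((k : ℝ) / n)) = ξ (fun k => f (k : ℝ)) := by
  have hn' : (0 : ℝ) < n := Nat.cast_pos.2 hn
  have hdiv_nonneg (k : ℕ) : (0 : ℝ) ≤ (k : ℝ) / n := by positivity
  have hdiv_top : Tendsto (fun k : ℕ => (k : ℝ) / n) atTop atTop :=
    tendsto_natCast_atTop_atTop.atTop_div_const hn'
  have hle_ceil (k : ℕ) : (k : ℝ) / n ≤ ((k + n - 1) / n : ℕ) := by
    rw [div_le_iff₀' hn']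
    exact_mod_cast (le_smul_ceilDiv hn : k ≤ n • (k ⌈/⌉ n))
  have hceil_le (k : ℕ) : (((k + n - 1) / n : ℕ) : ℝ) ≤ ((k + n : ℕ) : ℝ) / n :=
    Nat.cast_div_le.trans (by gcongr; exact Nat.sub_le _ _)
  have hadd (k : ℕ) : ((k + n : ℕ) : ℝ) / n = k / n + 1 := by
    rw [Nat.cast_add, add_div, div_self hn'.ne']
  rw [← hD n hn _ (hf.isBddSeq_comp fun k => k.cast_nonneg)]
  apply le_antisymm
  · exact hf.map_comp_le_map_comp hξ hT hdiv_nonneg hdiv_top hle_ceil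
      fun k => (hceil_le k).trans_eq (hadd k)
  · rw [← hT.map_add_nat (hf.isBddSeq_comp hdiv_nonneg) n]
    exact hf.map_comp_le_map_comp hξ hT (fun k => Nat.cast_nonneg _)
      (tendsto_atTop_mono hle_ceil hdiv_top) hceil_le
      fun k => (hadd k).trans_le (add_le_add_left (hle_ceil k) 1)

theorem map_mul_ratCast (hf : IsBddMonotoneRatio f) (hξ : IsLinfState ξ) (hT : ShiftInv ξ)
    (hD : DilInv ξ) {q : ℚ} (hq : 0 < q) :
    ξ (fun k => f ((k : ℝ) * q)) = ξ (fun k => f (k : ℝ)) := by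
  obtain ⟨m, n, hm, hn, rfl⟩ : ∃ m n : ℕ, 0 < m ∧ 0 < n ∧ q = m / n := by
    lift q to ℚ≥0 using hq.le
    exact ⟨q.num, q.den, NNRat.num_pos.2 (NNRat.cast_pos.1 hq), q.den_pos, NNRat.cast_def q⟩
  have hm' : (0 : ℝ) < m := Nat.cast_pos.2 hm
  have hfm : IsBddMonotoneRatio fun t => f (t * m) := hf.comp_mul_right hm'
  calc ξ (fun k => f ((k : ℝ) * (m / n : ℚ)))
      = ξ (fun k => f ((k : ℝ) / n * m)) := by
        simp only [Rat.cast_div, Rat.cast_natCast, div_mul_eq_mul_div, ← mul_div_assoc]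
    _ = ξ (fun k => f ((k : ℝ) * m)) := hfm.map_div_natCast hξ hT hD hn
    _ = ξ (fun k => f ((k : ℝ) / m * m)) := (hfm.map_div_natCast hξ hT hD hm).symm
    _ = ξ (fun k => f (k : ℝ)) := by simp only [div_mul_cancel₀ _ hm'.ne']

theorem monotoneOn_mul_map (hf : IsBddMonotoneRatio f) (hξ : IsLinfState ξ) (hT : ShiftInv ξ) :
    MonotoneOn (fun x : ℝ => x * ξ (fun k => f ((k : ℝ) * x))) (Set.Ioi 0) := by
  have hbdd {x : ℝ} (hx : 0 < x) : IsBddSeq fun k => f ((k : ℝ) * x) :=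
    hf.isBddSeq_comp fun k => by positivity
  intro x (hx : 0 < x) y (hy : 0 < y) hxy
  dsimp only
  rw [← hξ.2.1 x _ (hbdd hx), ← hξ.2.1 y _ (hbdd hy)]
  refine hξ.le_of_eventually_le_add hT ((hbdd hx).smul x) ((hbdd hy).smul y) fun ε hε => ?_
  filter_upwards [eventually_gt_atTop 0] with k hk
  have hk' : (0 : ℝ) < k := Nat.cast_pos.2 hk
  have hmul : k * x * f (k * x) ≤ k * y * f (k * y) :=
    hf.monotoneOn_mul_self (mul_pos hk' hx) (mul_pos hk' hy) (by gcongr)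
  have hle : x * f (k * x) ≤ y * f (k * y) := by
    refine le_of_mul_le_mul_left ?_ hk'
    simpa only [mul_assoc] using hmul
  exact hle.trans (le_add_of_nonneg_right hε.le)

end IsBddMonotoneRatio

/-- for a state `ξ` on `ℓ^∞` invariant under the unit shift `T_1` and
under all dilations `D_j`, `j ∈ ℕ`, one has `ξ({f(k/a)}_k) = ξ({f(k)}_k)` for every
`a > 0`, where `f` is bounded on `[0,∞)` with `f(t) = g(t)/t` for `t > 0`,
`g` nondecreasing on `[0,∞)`. -/
theorem shift_dilation_invariant_state_real_dilation
    (ξ : (ℕ → ℝ) → ℝ) (hst : IsLinfState ξ) (hT : ShiftInv ξ) (hD : DilInv ξ)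
    (f g : ℝ → ℝ) (hfb : ∃ C, ∀ t ≥ (0 : ℝ), |f t| ≤ C)
    (hfg : ∀ t > (0 : ℝ), f t = g t / t) (hg : MonotoneOn g (Set.Ici 0))
    (a : ℝ) (ha : 0 < a) :
    ξ (fun k => f ((k : ℝ) / a)) = ξ (fun k => f (k : ℝ)) := by
  have hf : IsBddMonotoneRatio f := .of_eq_div hfb hfg (hg.mono Set.Ioi_subset_Ici_self)
  have hrat : Set.EqOn (fun x : ℝ => x * ξ (fun k => f ((k : ℝ) * x)))
      (fun x => x * ξ (fun k => f (k : ℝ))) (Set.Ioi 0 ∩ Set.range ((↑) : ℚ → ℝ)) := by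
    rintro _ ⟨hq : (0 : ℝ) < _, q, rfl⟩
    exact congrArg _ (hf.map_mul_ratCast hst hT hD (Rat.cast_pos.1 hq))
  have hreal := eqOn_of_monotoneOn_of_continuousOn_of_dense isOpen_Ioi Rat.denseRange_cast
    (hf.monotoneOn_mul_map hst hT) (by fun_prop) hrat
  have ha' : 0 < a⁻¹ := inv_pos.2 ha
  simpa only [div_eq_mul_inv] using mul_left_cancel₀ ha'.ne' (hreal ha')
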